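/- Generalized difference Mason theorem: Let a_1, …, a_{m+1} ∈ ℂ[z] be relatively prime polynomials with a_1 + ⋯ + a_m = a_{m+1}, such that a_1, …, a_m are linearly independent over ℂ. Then for any κ ∈ ℂ \ {0}, max_{1≤i≤m+1} deg a_i ≤ ∑_{i=1}^{m+1} ñ_κ^{[m−1]}(a_i) − m(m−1)/2, where ñ_κ^{[m−1]}(a_i) = ∑_{w∈ℂ} (ord_w(a_i) − min_{0≤j≤m−1} ord_{w+jκ}(a_i)). -/

import Mathlib

open Polynomial

noncomputable def deltaP (κ : ℂ) (p : ℂ[X]) : ℂ[X] := p.comp (X + C κ) - p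

noncomputable def nTilde (κ : ℂ) (p : ℂ[X]) : ℕ :=
  ∑ᶠ w : ℂ, (p.rootMultiplicity w - min (p.rootMultiplicity w) (p.rootMultiplicity (w + κ)))

noncomputable def radTilde (κ : ℂ) (p : ℂ[X]) : ℂ[X] :=
  ∏ᶠ w : ℂ, (X - C w) ^ (p.rootMultiplicity w - min (p.rootMultiplicity w) (p.rootMultiplicity (w + κ)))

noncomputable def nTildeQ (κ : ℂ) (q : ℕ) (p : ℂ[X]) : ℕ :=
  ∑ᶠ w : ℂ, (p.rootMultiplicity w -
    (Finset.range (q + 1)).inf' (Finset.nonempty_range_iff.mpr (Nat.succ_ne_zero q)) (fun j => p.rootMultiplicity (w + (j : ℂ) * κ)))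

noncomputable def kFac (κ : ℂ) (n : ℕ) (p : ℂ[X]) : ℂ[X] :=
  ∏ j ∈ Finset.range n, p.comp (X + C ((j : ℂ) * κ))

/-- The forward difference operator `p ↦ p (X + κ) - p` on complex polynomials. -/
noncomputable def fwdDiffEnd (κ : ℂ) : Module.End ℂ ℂ[X] := taylor κ - 1

theorem fwdDiffEnd_apply (κ : ℂ) (p : ℂ[X]) : fwdDiffEnd κ p = taylor κ p - p := rfl

theorem degree_fwdDiffEnd_add_one_le (κ : ℂ) (p : ℂ[X]) :
    (fwdDiffEnd κ p).degree + 1 ≤ p.degree := by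
  rcases eq_or_ne p 0 with rfl | hp
  · simp
  · have hlt : (fwdDiffEnd κ p).degree < p.degree := by
      rw [fwdDiffEnd_apply, ← degree_taylor p κ]
      refine degree_sub_lt_left (degree_taylor p κ) ?_ (leadingCoeff_taylor ..)
      rwa [Ne, ← degree_eq_bot, degree_taylor, degree_eq_bot]
    rcases eq_or_ne (fwdDiffEnd κ p) 0 with h | h
    · simp [h]
    · rw [degree_eq_natDegree h, degree_eq_natDegree hp] at hlt ⊢
      exact_mod_cast hlt

theorem degree_fwdDiffEnd_pow_add_le (κ : ℂ) (p : ℂ[X]) (k : ℕ) :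
    ((fwdDiffEnd κ ^ k) p).degree + k ≤ p.degree := by
  induction k with
  | zero => simp
  | succ k ih =>
    rw [pow_succ', Module.End.mul_apply]
    calc (fwdDiffEnd κ ((fwdDiffEnd κ ^ k) p)).degree + ((k + 1 : ℕ) : WithBot ℕ)
        = ((fwdDiffEnd κ ((fwdDiffEnd κ ^ k) p)).degree + 1) + k := by
          push_cast; rw [add_assoc, add_comm (1 : WithBot ℕ)]
      _ ≤ ((fwdDiffEnd κ ^ k) p).degree + k := by
          gcongr; exact degree_fwdDiffEnd_add_one_le κ _
      _ ≤ p.degree := ih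

theorem dvd_fwdDiffEnd_pow (κ : ℂ) (d : ℂ[X]) (k : ℕ) :
    ∀ p : ℂ[X], (∀ j ≤ k, d ∣ taylor (j * κ) p) → d ∣ (fwdDiffEnd κ ^ k) p := by
  induction k with
  | zero => intro p h; simpa using h 0 le_rfl
  | succ k ih =>
    intro p h
    rw [pow_succ, Module.End.mul_apply]
    refine ih _ fun j hj => ?_
    rw [fwdDiffEnd_apply, map_sub, taylor_taylor]
    refine dvd_sub ?_ (h j (by lia))
    have := h (j + 1) (by lia)
    rwa [show j * κ + κ = ((j + 1 : ℕ) : ℂ) * κ by push_cast; ring]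

theorem pow_rootMultiplicity_dvd_taylor (p : ℂ[X]) (w r : ℂ) :
    (X - C w) ^ p.rootMultiplicity (w + r) ∣ taylor r p := by
  have h := map_dvd (taylorAlgHom r) (pow_rootMultiplicity_dvd p (w + r))
  have hX : taylorAlgHom r (X - C (w + r)) = X - C w := by
    simp [taylorAlgHom_apply, map_sub]
  rw [map_pow, hX] at h
  exact h

/-- The Casoratian matrix of a family of polynomials, written with iterated differences. -/
noncomputable def casoratiMatrix (κ : ℂ) {m : ℕ} (b : Fin m → ℂ[X]) :
    Matrix (Fin m) (Fin m) ℂ[X] :=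
  Matrix.of fun i j => (fwdDiffEnd κ ^ (j : ℕ)) (b i)

theorem natDegree_det_casoratiMatrix_add_le (κ : ℂ) {m : ℕ} (b : Fin m → ℂ[X])
    (h : (casoratiMatrix κ b).det ≠ 0) :
    (casoratiMatrix κ b).det.natDegree + m * (m - 1) / 2 ≤ ∑ i, (b i).natDegree := by
  have key : (casoratiMatrix κ b).det.degree + ((m * (m - 1) / 2 : ℕ) : WithBot ℕ) ≤
      ((∑ i, (b i).natDegree : ℕ) : WithBot ℕ) := by
    have hterm : ∀ σ : Equiv.Perm (Fin m),
        (Equiv.Perm.sign σ • ∏ i, casoratiMatrix κ b (σ i) i).degree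
          + ((m * (m - 1) / 2 : ℕ) : WithBot ℕ) ≤ ((∑ i, (b i).natDegree : ℕ) : WithBot ℕ) := by
      intro σ
      have hs : (Equiv.Perm.sign σ • ∏ i, casoratiMatrix κ b (σ i) i).degree =
          (∏ i, casoratiMatrix κ b (σ i) i).degree := by
        rcases Int.units_eq_one_or (Equiv.Perm.sign σ) with h | h <;> simp [h]
      rw [hs, degree_prod, ← Finset.sum_range_id, ← Fin.sum_univ_eq_sum_range (fun i => i),
        Nat.cast_sum, ← Finset.sum_add_distrib, ← Equiv.sum_comp σ (fun i => (b i).natDegree),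
        Nat.cast_sum]
      exact Finset.sum_le_sum fun i _ =>
        (degree_fwdDiffEnd_pow_add_le κ (b (σ i)) i).trans degree_le_natDegree
    rw [Matrix.det_apply]
    refine Finset.sum_induction _ (fun f : ℂ[X] => f.degree
      + ((m * (m - 1) / 2 : ℕ) : WithBot ℕ) ≤ ((∑ i, (b i).natDegree : ℕ) : WithBot ℕ))
      (fun f g hf hg => ?_) (by simp) fun σ _ => hterm σ
    rcases max_choice f.degree g.degree with h | h
    · exact (add_le_add_left ((degree_add_le f g).trans h.le) _).trans hf
    · exact (add_le_add_left ((degree_add_le f g).trans h.le) _).trans hg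
  rw [degree_eq_natDegree h] at key
  exact_mod_cast key

theorem exists_forall_eval_add_nat_mul_ne_zero {κ : ℂ} (hκ : κ ≠ 0) {p : ℂ[X]} (hp : p ≠ 0) :
    ∃ z : ℂ, ∀ n : ℕ, p.eval (z + n * κ) ≠ 0 := by
  have hinj : Function.Injective fun n : ℕ => (n : ℂ) * κ := fun x y h =>
    Nat.cast_injective (mul_right_cancel₀ hκ h)
  have hfin : {n : ℕ | p.eval ((n : ℂ) * κ) = 0}.Finite := by
    refine ((p.roots.toFinset.finite_toSet).preimage hinj.injOn).subset fun n hn => ?_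
    simpa [hp] using hn
  obtain ⟨N, hN⟩ := hfin.bddAbove
  refine ⟨(N + 1 : ℕ) * κ, fun n hn => ?_⟩
  have : N + 1 + n ≤ N := hN (by
    simp only [Set.mem_ofPred_eq]; rw [← hn]; push_cast; ring_nf)
  lia

theorem eq_zero_of_eval_fwdDiffEnd_pow_eq_zero {κ z : ℂ} (hκ : κ ≠ 0) {r : ℕ} {f : ℂ[X]}
    {c : ℕ → ℂ[X]} (hc : ∀ n : ℕ, (c r).eval (z + n * κ) ≠ 0)
    (hf : ∑ j ∈ Finset.range (r + 1), c j * (fwdDiffEnd κ ^ j) f = 0)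
    (h0 : ∀ j < r, ((fwdDiffEnd κ ^ j) f).eval z = 0) : f = 0 := by
  have hzero : ∀ n : ℕ, ∀ j ≤ r, ((fwdDiffEnd κ ^ j) f).eval (z + n * κ) = 0 := by
    have hlast : ∀ x : ℂ, (c r).eval x ≠ 0 → (∀ j < r, ((fwdDiffEnd κ ^ j) f).eval x = 0) →
        ∀ j ≤ r, ((fwdDiffEnd κ ^ j) f).eval x = 0 := by
      intro x hx h j hj
      rcases hj.lt_or_eq with hj | rfl
      · exact h j hj
      · have := congrArg (eval x) hf
        rw [Finset.sum_range_succ, eval_add, eval_finsetSum, Finset.sum_eq_zero, zero_add,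
          eval_mul, eval_zero] at this
        · exact (mul_eq_zero.mp this).resolve_left hx
        · intro i hi
          rw [eval_mul, h i (Finset.mem_range.mp hi), mul_zero]
    intro n
    induction n with
    | zero => exact hlast _ (hc 0) (by simpa using h0)
    | succ n ih =>
      refine hlast _ (hc _) fun j hj => ?_
      have h1 := ih (j + 1) hj
      rw [pow_succ', Module.End.mul_apply, fwdDiffEnd_apply, eval_sub, ih j hj.le, sub_zero,
        taylor_eval] at h1
      rw [← h1]; push_cast; ring_nf
  refine eq_zero_of_infinite_isRoot f (Set.infinite_of_injective_forall_mem
    (f := fun n : ℕ => z + n * κ) (fun x y h => ?_) fun n => ?_)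
  · exact Nat.cast_injective (mul_right_cancel₀ hκ (add_left_cancel h))
  · simpa using hzero n 0 (Nat.zero_le _)

theorem det_casoratiMatrix_ne_zero {κ : ℂ} (hκ : κ ≠ 0) {m : ℕ} {b : Fin m → ℂ[X]}
    (hb : LinearIndependent ℂ b) : (casoratiMatrix κ b).det ≠ 0 := by
  intro hdet
  obtain ⟨v, hv, hMv⟩ := Matrix.exists_mulVec_eq_zero_iff.mpr hdet
  obtain ⟨i₀, hi₀⟩ := Function.ne_iff.mp hv
  obtain ⟨r, hr, hmax⟩ := (Finset.univ.filter fun i => v i ≠ 0).exists_max_image id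
    ⟨i₀, by simpa using hi₀⟩
  simp only [Finset.mem_filter, Finset.mem_univ, true_and, id] at hr hmax
  set c : ℕ → ℂ[X] := fun j => if h : j < m then v ⟨j, h⟩ else 0 with hcdef
  have hcr : c r = v r := by simp [hcdef]
  have hL : ∀ i, ∑ j ∈ Finset.range (r + 1), c j * (fwdDiffEnd κ ^ j) (b i) = 0 := by
    intro i
    have h := congrFun hMv i
    simp only [Matrix.mulVec, dotProduct, casoratiMatrix, Matrix.of_apply, Pi.zero_apply] at h
    rw [← h]
    have : ∑ j : Fin m, (fwdDiffEnd κ ^ (j : ℕ)) (b i) * v j =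
        ∑ j ∈ Finset.range m, c j * (fwdDiffEnd κ ^ j) (b i) := by
      rw [← Fin.sum_univ_eq_sum_range (fun j => c j * (fwdDiffEnd κ ^ j) (b i))]
      exact Finset.sum_congr rfl fun j _ => by simp [hcdef, mul_comm]
    rw [this]
    refine Finset.sum_subset (Finset.range_mono (by lia)) fun j hj hj' => ?_
    simp only [Finset.mem_range] at hj hj'
    have : c j = 0 := by
      simp only [hcdef, hj, dif_pos]
      by_contra hne
      have := hmax _ hne
      rw [Fin.le_def] at this
      lia
    rw [this, zero_mul]
  obtain ⟨z, hz⟩ := exists_forall_eval_add_nat_mul_ne_zero hκ hr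
  let T : ℂ[X] →ₗ[ℂ] (Fin r → ℂ) :=
    LinearMap.pi fun j => (leval z).comp (fwdDiffEnd κ ^ (j : ℕ))
  have hker := LinearMap.ker_ne_bot_of_finrank_lt (f := T.comp (Fintype.linearCombination ℂ b))
    (by simp)
  obtain ⟨g, hg, hg0⟩ := (Submodule.ne_bot_iff _).mp hker
  refine hg0 (funext (Fintype.linearIndependent_iff.mp hb g ?_))
  refine eq_zero_of_eval_fwdDiffEnd_pow_eq_zero hκ (r := r) (c := c) (z := z)
    (by simpa only [hcr] using hz) ?_ fun j hj => ?_
  · simp only [map_sum, map_smul, Finset.mul_sum, mul_smul_comm]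
    rw [Finset.sum_comm]
    exact Finset.sum_eq_zero fun i _ => by rw [← Finset.smul_sum, hL i, smul_zero]
  · exact congrFun (LinearMap.mem_ker.mp hg) ⟨j, hj⟩

/-- The least multiplicity of `p` at the points `w, w + κ, …, w + q * κ`. -/
noncomputable def minShiftMultiplicity (κ : ℂ) (q : ℕ) (w : ℂ) (p : ℂ[X]) : ℕ :=
  (Finset.range (q + 1)).inf' (Finset.nonempty_range_iff.mpr (Nat.succ_ne_zero q))
    (fun j => p.rootMultiplicity (w + (j : ℂ) * κ))

theorem minShiftMultiplicity_le (κ : ℂ) {q j : ℕ} (hj : j ≤ q) (w : ℂ) (p : ℂ[X]) :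
    minShiftMultiplicity κ q w p ≤ p.rootMultiplicity (w + (j : ℂ) * κ) :=
  Finset.inf'_le (fun j : ℕ => p.rootMultiplicity (w + (j : ℂ) * κ))
    (Finset.mem_range.mpr (Nat.lt_succ_of_le hj))

theorem pow_minShiftMultiplicity_dvd_det (κ w : ℂ) {m : ℕ} (b : Fin m → ℂ[X]) :
    (X - C w) ^ (∑ i, minShiftMultiplicity κ (m - 1) w (b i)) ∣ (casoratiMatrix κ b).det := by
  rw [Matrix.det_apply]
  refine Finset.dvd_sum fun σ _ => Dvd.dvd.trans (b := ∏ i, casoratiMatrix κ b (σ i) i) ?_ ?_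
  · rw [← Finset.prod_pow_eq_pow_sum,
      ← Equiv.prod_comp σ (fun i => (X - C w) ^ minShiftMultiplicity κ (m - 1) w (b i))]
    refine Finset.prod_dvd_prod_of_dvd _ _ fun i _ => dvd_fwdDiffEnd_pow κ _ _ _ fun j hj => ?_
    exact (pow_dvd_pow _ (minShiftMultiplicity_le κ (by lia) w _)).trans
      (pow_rootMultiplicity_dvd_taylor _ _ _)
  · rcases Int.units_eq_one_or (Equiv.Perm.sign σ) with h | h <;> simp [h]

theorem sum_rootMultiplicity_eq_natDegree {p : ℂ[X]} {S : Finset ℂ}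
    (hS : p.roots.toFinset ⊆ S) : ∑ w ∈ S, p.rootMultiplicity w = p.natDegree := by
  rw [← IsAlgClosed.card_roots_eq_natDegree, ← Multiset.sum_count_eq_card (s := S)
    fun w hw => hS (Multiset.mem_toFinset.mpr hw)]
  simp

theorem sum_rootMultiplicity_le_natDegree (p : ℂ[X]) (S : Finset ℂ) :
    ∑ w ∈ S, p.rootMultiplicity w ≤ p.natDegree := by
  classical
  rw [← sum_rootMultiplicity_eq_natDegree (S := S ∪ p.roots.toFinset) Finset.subset_union_right]
  exact Finset.sum_le_sum_of_subset Finset.subset_union_left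

theorem natDegree_le_nTildeQ_add (κ : ℂ) (q : ℕ) {p : ℂ[X]} {S : Finset ℂ}
    (hS : p.roots.toFinset ⊆ S) :
    p.natDegree ≤ nTildeQ κ q p + ∑ w ∈ S, minShiftMultiplicity κ q w p := by
  have hn : nTildeQ κ q p =
      ∑ w ∈ S, (p.rootMultiplicity w - minShiftMultiplicity κ q w p) := by
    refine finsum_eq_sum_of_support_subset _ fun w hw => hS ?_
    rw [Multiset.mem_toFinset, ← Multiset.count_pos, count_roots]
    rw [Function.mem_support] at hw
    lia
  rw [hn, ← Finset.sum_add_distrib, ← sum_rootMultiplicity_eq_natDegree hS]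
  exact Finset.sum_le_sum fun w _ => le_tsub_add

theorem exists_casoratiMatrix_det_eq_of_omit (κ : ℂ) {m : ℕ} (a : Fin (m + 1) → ℂ[X])
    (hsum : ∑ i : Fin m, a i.castSucc = a (Fin.last m)) (k : Fin (m + 1)) :
    ∃ b : Fin m → ℂ[X],
      (casoratiMatrix κ b).det = (casoratiMatrix κ fun i => a i.castSucc).det ∧
      ∀ f : ℂ[X] → ℕ, ∑ i, f (b i) + f (a k) = ∑ i, f (a i) := by
  induction k using Fin.lastCases with
  | last => exact ⟨fun i => a i.castSucc, rfl, fun f =>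
    (Fin.sum_univ_castSucc fun i => f (a i)).symm⟩
  | cast i =>
    refine ⟨Function.update (fun i => a i.castSucc) i (a (Fin.last m)), ?_, fun f => ?_⟩
    · have h := Matrix.det_updateRow_sum (casoratiMatrix κ fun i => a i.castSucc) i (fun _ => 1)
      rw [one_smul] at h
      rw [← h]
      congr 1
      ext1 x y
      rcases eq_or_ne x i with rfl | hx
      · rw [Matrix.updateRow_self]
        simp only [one_smul]
        exact (by simp [casoratiMatrix, ← hsum] : _ = ∑ k : Fin m,
          casoratiMatrix κ (fun i => a i.castSucc) k y).trans (Finset.sum_apply _ _ _).symm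
      · simp [casoratiMatrix, hx]
    · rw [Fin.sum_univ_castSucc, ← Finset.add_sum_erase _ _ (Finset.mem_univ i),
        ← Finset.add_sum_erase _ (fun i : Fin m => f (a i.castSucc)) (Finset.mem_univ i),
        Finset.sum_congr rfl fun x hx => by
          rw [Function.update_of_ne (Finset.ne_of_mem_erase hx)], Function.update_self]
      ring

theorem stmt_13 (m : ℕ) (κ : ℂ) (hκ : κ ≠ 0) (a : Fin (m + 1) → ℂ[X])
    (hrp : ∀ d : ℂ[X], (∀ i, d ∣ a i) → IsUnit d)
    (hli : LinearIndependent ℂ (fun i : Fin m => a i.castSucc))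
    (hsum : ∑ i : Fin m, a i.castSucc = a (Fin.last m)) :
    (Finset.univ.sup fun i => (a i).natDegree) + m * (m - 1) / 2 ≤
      ∑ i : Fin (m + 1), nTildeQ κ (m - 1) (a i) := by
  classical
  have hW := det_casoratiMatrix_ne_zero hκ hli
  set W := (casoratiMatrix κ fun i : Fin m => a i.castSucc).det with hWdef
  have hord : ∀ w, ∑ i, minShiftMultiplicity κ (m - 1) w (a i) ≤ W.rootMultiplicity w := by
    intro w
    obtain ⟨k, hk⟩ : ∃ k, ¬ (X - C w) ∣ a k := by
      by_contra! h
      exact not_isUnit_X_sub_C w (hrp _ h)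
    obtain ⟨b, hdet, hb⟩ := exists_casoratiMatrix_det_eq_of_omit κ a hsum k
    have hk0 : minShiftMultiplicity κ (m - 1) w (a k) = 0 := by
      have h := minShiftMultiplicity_le κ (Nat.zero_le (m - 1)) w (a k)
      rw [Nat.cast_zero, zero_mul, add_zero,
        rootMultiplicity_eq_zero fun h => hk (dvd_iff_isRoot.mpr h)] at h
      exact Nat.le_zero.mp h
    rw [← hb, hk0, add_zero, le_rootMultiplicity_iff hW, hWdef, ← hdet]
    exact pow_minShiftMultiplicity_dvd_det κ w b
  have hdeg : (Finset.univ.sup fun i => (a i).natDegree) + (W.natDegree + m * (m - 1) / 2) ≤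
      ∑ i, (a i).natDegree := by
    obtain ⟨k, -, hk⟩ := Finset.exists_mem_eq_sup Finset.univ Finset.univ_nonempty
      fun i => (a i).natDegree
    obtain ⟨b, hdet, hb⟩ := exists_casoratiMatrix_det_eq_of_omit κ a hsum k
    have h := natDegree_det_casoratiMatrix_add_le κ b (hdet ▸ hW)
    rw [hdet] at h
    rw [hk, ← hb natDegree, add_comm]
    exact Nat.add_le_add_right h _
  let S : Finset ℂ := Finset.univ.biUnion fun i => (a i).roots.toFinset
  have hcount : ∑ i, (a i).natDegree ≤ ∑ i, nTildeQ κ (m - 1) (a i) + W.natDegree :=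
    calc ∑ i, (a i).natDegree
        ≤ ∑ i, (nTildeQ κ (m - 1) (a i) + ∑ w ∈ S, minShiftMultiplicity κ (m - 1) w (a i)) :=
          Finset.sum_le_sum fun i _ => natDegree_le_nTildeQ_add κ _
            (Finset.subset_biUnion_of_mem (fun i => (a i).roots.toFinset) (Finset.mem_univ i))
      _ = ∑ i, nTildeQ κ (m - 1) (a i) +
            ∑ w ∈ S, ∑ i, minShiftMultiplicity κ (m - 1) w (a i) := by
          rw [Finset.sum_add_distrib, Finset.sum_comm (s := S)]
      _ ≤ ∑ i, nTildeQ κ (m - 1) (a i) + W.natDegree := by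
          gcongr
          exact (Finset.sum_le_sum fun w _ => hord w).trans
            (sum_rootMultiplicity_le_natDegree W S)
  lia
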